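/- Let Q be the optimal soft Q-function for reward r, and let f : ℝ → ℝ satisfy: (1) f is concave; (2i) f(x+y) ≥ f(x) + f(y) for all x, y; (2ii) f(γx) ≥ γ·f(x) for all x; (3) f(log ∑_{a} π₀(a|s)·exp 𝒬(s,a)) ≥ log ∑_{a} π₀(a|s)·exp f(𝒬(s,a)) for every function 𝒬 : S × A → ℝ and every s ∈ S. Define V_f(s) = log ∑_{a} π₀(a|s)·exp f(Q(s,a)) and r̂_C(s,a) = f(Q(s,a)) − f(r(s,a)) − γ·∑_{s'} p(s'|s,a)·V_f(s'), and let Ĉ be the function satisfying Ĉ(s,a) = r̂_C(s,a) + γ·∑_{s'} p(s'|s,a)·max_{a'∈A} Ĉ(s',a'). If Q̃ is the optimal soft Q-function for the transformed reward (s,a) ↦ f(r(s,a)), then for all (s,a): f(Q(s,a)) − Ĉ(s,a) ≤ Q̃(s,a) ≤ f(Q(s,a)). -/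

import Mathlib

/-!
`Q̃` is the fixed point of the soft Bellman operator for the reward `f ∘ r`, and this operator obeys
a comparison principle: a subsolution lies below every supersolution, because the maximum `c` of
their difference satisfies `c ≤ θ * c` for some `θ < 1`. Concavity, superadditivity and the
log-sum-exp condition make `f ∘ Q` a supersolution. Its Bellman residual is `r̂_C`, and since
`softV g - max h ≤ softV (g - h)`, subtracting `Ĉ` turns `f ∘ Q` into a subsolution.
-/

open Finset

/-- Maximum of a real-valued function over a nonempty finite action set. -/
noncomputable def amax {A : Type*} [Fintype A] [Nonempty A] (g : A → ℝ) : ℝ :=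
  Finset.univ.sup' Finset.univ_nonempty g

/-- The soft (log-sum-exp) value of `g` under the prior action distribution `π0`. -/
noncomputable def softV {A : Type*} [Fintype A] (π0 : A → ℝ) (g : A → ℝ) : ℝ :=
  Real.log (∑ a, π0 a * Real.exp (g a))

section SoftValue

variable {A : Type*} [Fintype A] [Nonempty A] {w : A → ℝ}

lemma sum_mul_exp_pos (hw : ∀ a, 0 < w a) (g : A → ℝ) : 0 < ∑ a, w a * Real.exp (g a) :=
  sum_pos (fun a _ => mul_pos (hw a) (Real.exp_pos _)) univ_nonempty

lemma softV_mono (hw : ∀ a, 0 < w a) : Monotone (softV w) := fun g _ hgh =>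
  Real.log_le_log (sum_mul_exp_pos hw g) <| sum_le_sum fun a _ =>
    mul_le_mul_of_nonneg_left (Real.exp_le_exp.mpr (hgh a)) (hw a).le

lemma softV_add_const (hw : ∀ a, 0 < w a) (g : A → ℝ) (c : ℝ) :
    softV w (fun a => g a + c) = softV w g + c := by
  simp only [softV, Real.exp_add, ← mul_assoc, ← sum_mul]
  rw [Real.log_mul (sum_mul_exp_pos hw g).ne' (Real.exp_ne_zero c), Real.log_exp]

lemma le_amax (g : A → ℝ) (a : A) : g a ≤ amax g :=
  le_sup' g (mem_univ a)

lemma softV_sub_amax_le (hw : ∀ a, 0 < w a) (g h : A → ℝ) :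
    softV w g - amax h ≤ softV w (fun a => g a - h a) := by
  rw [sub_eq_add_neg, ← softV_add_const hw]
  refine softV_mono hw fun a => ?_
  rw [← sub_eq_add_neg]
  exact sub_le_sub_left (le_amax h a) (g a)

end SoftValue

/-- The soft Bellman optimality operator for the reward `r`. The discount is absorbed into the
kernel, so `κ` plays the role of `γ * p`; the prior weights `w s` are unnormalised. -/
noncomputable def softBellman {S A : Type*} [Fintype S] [Fintype A] (κ : S → A → S → ℝ)
    (w : S → A → ℝ) (r Q : S → A → ℝ) (s : S) (a : A) : ℝ :=
  r s a + ∑ s', κ s a s' * softV (w s') (Q s')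

lemma softBellman_const_mul {S A : Type*} [Fintype S] [Fintype A] (γ : ℝ) (p : S → A → S → ℝ)
    (w r Q : S → A → ℝ) (s : S) (a : A) :
    softBellman (fun s a s' => γ * p s a s') w r Q s a =
      r s a + γ * ∑ s', p s a s' * softV (w s') (Q s') := by
  simp only [softBellman, mul_sum, mul_assoc]

section Comparison

variable {S A : Type*} [Fintype S] [Fintype A] {κ : S → A → S → ℝ} {w : S → A → ℝ}
  {r Q₁ Q₂ : S → A → ℝ}

lemma softBellman_mono [Nonempty A] (hκ : ∀ s a s', 0 ≤ κ s a s') (hw : ∀ s a, 0 < w s a) :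
    Monotone (softBellman κ w r) := fun _ _ hQ s a =>
  add_le_add_right (sum_le_sum fun s' _ =>
    mul_le_mul_of_nonneg_left (softV_mono (hw s') (hQ s')) (hκ s a s')) (r s a)

lemma softBellman_add_const [Nonempty A] (hw : ∀ s a, 0 < w s a) (Q : S → A → ℝ) (c : ℝ)
    (s : S) (a : A) :
    softBellman κ w r (fun s a => Q s a + c) s a =
      softBellman κ w r Q s a + (∑ s', κ s a s') * c := by
  simp only [softBellman, softV_add_const (hw _), mul_add, sum_add_distrib, sum_mul, add_assoc]

theorem le_of_le_softBellman_of_softBellman_le (hκ : ∀ s a s', 0 ≤ κ s a s')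
    (hκ_sum : ∀ s a, ∑ s', κ s a s' < 1) (hw : ∀ s a, 0 < w s a)
    (h₁ : Q₁ ≤ softBellman κ w r Q₁) (h₂ : softBellman κ w r Q₂ ≤ Q₂) : Q₁ ≤ Q₂ := by
  intro s a
  have : Nonempty A := ⟨a⟩
  have : Nonempty (S × A) := ⟨(s, a)⟩
  obtain ⟨⟨s₀, a₀⟩, hmax⟩ := Finite.exists_max fun x : S × A => Q₁ x.1 x.2 - Q₂ x.1 x.2
  set c := Q₁ s₀ a₀ - Q₂ s₀ a₀
  have hQ : Q₁ ≤ fun s a => Q₂ s a + c := fun s a => sub_le_iff_le_add'.mp (hmax (s, a))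
  have hc_le : c ≤ (∑ s', κ s₀ a₀ s') * c := sub_le_iff_le_add'.mpr <| calc
    Q₁ s₀ a₀ ≤ softBellman κ w r Q₁ s₀ a₀ := h₁ s₀ a₀
    _ ≤ softBellman κ w r (fun s a => Q₂ s a + c) s₀ a₀ := softBellman_mono hκ hw hQ s₀ a₀
    _ = softBellman κ w r Q₂ s₀ a₀ + (∑ s', κ s₀ a₀ s') * c := softBellman_add_const hw Q₂ c s₀ a₀
    _ ≤ Q₂ s₀ a₀ + (∑ s', κ s₀ a₀ s') * c := by gcongr; exact h₂ s₀ a₀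
  have hc_nonpos : c ≤ 0 := not_lt.mp fun hc_pos =>
    hc_le.not_gt (mul_lt_of_lt_one_left hc_pos (hκ_sum s₀ a₀))
  exact (hQ s a).trans (add_le_of_nonpos_right hc_nonpos)

theorem sub_le_softBellman_sub [Nonempty A] {K C : S → A → ℝ} (hκ : ∀ s a s', 0 ≤ κ s a s')
    (hw : ∀ s a, 0 < w s a)
    (hC : ∀ s a, C s a = K s a - softBellman κ w r K s a + ∑ s', κ s a s' * amax (C s')) :
    (fun s a => K s a - C s a) ≤ softBellman κ w r (fun s a => K s a - C s a) := fun s a => calc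
  K s a - C s a = softBellman κ w r K s a - ∑ s', κ s a s' * amax (C s') := by
    linarith [hC s a]
  _ = r s a + ∑ s', κ s a s' * (softV (w s') (K s') - amax (C s')) := by
    simp only [softBellman, mul_sub, sum_sub_distrib, add_sub_assoc]
  _ ≤ r s a + ∑ s', κ s a s' * softV (w s') (fun a' => K s' a' - C s' a') := by
    gcongr with s'
    · exact hκ s a s'
    · exact softV_sub_amax_le (hw s') (K s') (C s')

end Comparison

/-- The missing mass `1 - ∑ i ∈ t, q i` is placed at the origin. -/
lemma sum_smul_le_map_sum_smul_of_sum_le_one {E ι : Type*} [AddCommGroup E] [Module ℝ E]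
    {D : Set E} {f : E → ℝ} (hf : ConcaveOn ℝ D f) (hD : 0 ∈ D) (hf0 : 0 ≤ f 0) {t : Finset ι}
    {q : ι → ℝ} {x : ι → E} (hq : ∀ i ∈ t, 0 ≤ q i) (hq_sum : ∑ i ∈ t, q i ≤ 1)
    (hx : ∀ i ∈ t, x i ∈ D) : ∑ i ∈ t, q i • f (x i) ≤ f (∑ i ∈ t, q i • x i) := by
  have hv : 0 ≤ 1 - ∑ i ∈ t, q i := sub_nonneg.mpr hq_sum
  calc ∑ i ∈ t, q i • f (x i)
      ≤ (1 - ∑ i ∈ t, q i) • f 0 + ∑ i ∈ t, q i • f (x i) :=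
        le_add_of_nonneg_left (smul_nonneg hv hf0)
    _ ≤ f ((1 - ∑ i ∈ t, q i) • 0 + ∑ i ∈ t, q i • x i) :=
        hf.map_add_sum_le hq (sub_add_cancel _ _) hx hv hD
    _ = f (∑ i ∈ t, q i • x i) := by rw [smul_zero, zero_add]

section ConcaveTransformation

variable {S A : Type*} [Fintype S] [Fintype A] {κ : S → A → S → ℝ} {w : S → A → ℝ}
  {r Q : S → A → ℝ} {f : ℝ → ℝ}

theorem softBellman_comp_le_comp (hκ : ∀ s a s', 0 ≤ κ s a s')
    (hκ_sum : ∀ s a, ∑ s', κ s a s' ≤ 1) (hf_concave : ConcaveOn ℝ Set.univ f) (hf0 : 0 ≤ f 0)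
    (hf_superadd : ∀ x y, f x + f y ≤ f (x + y))
    (hf_lse : ∀ s, softV (w s) (fun a => f (Q s a)) ≤ f (softV (w s) (Q s)))
    (hQ : Q = softBellman κ w r Q) :
    softBellman κ w (fun s a => f (r s a)) (fun s a => f (Q s a)) ≤ fun s a => f (Q s a) :=
  fun s a => calc
  f (r s a) + ∑ s', κ s a s' * softV (w s') (fun a' => f (Q s' a'))
      ≤ f (r s a) + ∑ s', κ s a s' * f (softV (w s') (Q s')) := by
    gcongr with s'
    · exact hκ s a s'
    · exact hf_lse s'
  _ ≤ f (r s a) + f (∑ s', κ s a s' * softV (w s') (Q s')) := by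
    gcongr
    exact sum_smul_le_map_sum_smul_of_sum_le_one hf_concave (Set.mem_univ _) hf0
      (fun s' _ => hκ s a s') (hκ_sum s a) (fun _ _ => Set.mem_univ _)
  _ ≤ f (softBellman κ w r Q s a) := hf_superadd _ _
  _ = f (Q s a) := by rw [← hQ]

theorem concave_conditions_entreg_rl_general [Nonempty A] {Qt C : S → A → ℝ}
    (hκ : ∀ s a s', 0 ≤ κ s a s') (hκ_sum : ∀ s a, ∑ s', κ s a s' < 1)
    (hw : ∀ s a, 0 < w s a) (hQ : Q = softBellman κ w r Q)
    (hf_concave : ConcaveOn ℝ Set.univ f) (hf0 : 0 ≤ f 0)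
    (hf_superadd : ∀ x y, f x + f y ≤ f (x + y))
    (hf_lse : ∀ s, softV (w s) (fun a => f (Q s a)) ≤ f (softV (w s) (Q s)))
    (hC : ∀ s a, C s a =
      f (Q s a) - softBellman κ w (fun s a => f (r s a)) (fun s a => f (Q s a)) s a +
        ∑ s', κ s a s' * amax (C s'))
    (hQt : Qt = softBellman κ w (fun s a => f (r s a)) Qt) (s : S) (a : A) :
    f (Q s a) - C s a ≤ Qt s a ∧ Qt s a ≤ f (Q s a) :=
  ⟨le_of_le_softBellman_of_softBellman_le hκ hκ_sum hw
      (sub_le_softBellman_sub hκ hw hC) hQt.ge s a,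
    le_of_le_softBellman_of_softBellman_le hκ hκ_sum hw hQt.le
      (softBellman_comp_le_comp hκ (fun s a => (hκ_sum s a).le) hf_concave hf0 hf_superadd
        hf_lse hQ) s a⟩

end ConcaveTransformation

/-- **Concave conditions, entropy-regularized RL (Lemma 5.3).** -/
theorem concave_conditions_entreg_rl
    {S A : Type*} [Fintype S] [Fintype A] [Nonempty S] [Nonempty A]
    (p : S → A → S → ℝ)
    (hp_nonneg : ∀ s a s', 0 ≤ p s a s')
    (hp_sum : ∀ s a, ∑ s', p s a s' = 1)
    (γ : ℝ) (hγ0 : 0 < γ) (hγ1 : γ < 1)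
    -- prior policy
    (π0 : S → A → ℝ)
    (hπ0_pos : ∀ s a, 0 < π0 s a)
    (hπ0_sum : ∀ s, ∑ a, π0 s a = 1)
    (r : S → A → ℝ)
    -- Q is the optimal soft Q-function for reward r
    (Q : S → A → ℝ)
    (hQ : ∀ s a, Q s a = r s a + γ * ∑ s', p s a s' * softV (π0 s') (fun a' => Q s' a'))
    -- the transformation function f and its conditions
    (f : ℝ → ℝ)
    (hf_concave : ConcaveOn ℝ Set.univ f)
    (hf_superadd : ∀ x y, f x + f y ≤ f (x + y))
    (hf_superhom : ∀ x, γ * f x ≤ f (γ * x))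
    (hf_lse : ∀ (𝒬 : S → A → ℝ) (s : S),
      softV (π0 s) (fun a => f (𝒬 s a)) ≤ f (softV (π0 s) (fun a => 𝒬 s a)))
    -- V_f, the auxiliary reward r̂_C, and the fixed point Ĉ
    (Vf : S → ℝ)
    (hVf : ∀ s, Vf s = softV (π0 s) (fun a => f (Q s a)))
    (rCh : S → A → ℝ)
    (hrCh : ∀ s a, rCh s a = f (Q s a) - f (r s a) - γ * (∑ s', p s a s' * Vf s'))
    (Ch : S → A → ℝ)
    (hCh : ∀ s a, Ch s a = rCh s a + γ * ∑ s', p s a s' * amax (fun a' => Ch s' a'))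
    -- Q̃ is the optimal soft Q-function for the transformed reward f ∘ r
    (Qt : S → A → ℝ)
    (hQt : ∀ s a, Qt s a = f (r s a) + γ * ∑ s', p s a s' * softV (π0 s') (fun a' => Qt s' a')) :
    ∀ s a, f (Q s a) - Ch s a ≤ Qt s a ∧ Qt s a ≤ f (Q s a) := by
  have hκ_sum : ∀ s a, ∑ s', γ * p s a s' < 1 := fun s a => by rwa [← mul_sum, hp_sum, mul_one]
  have hf0 : 0 ≤ f 0 := by
    have γ_mul_le : γ * f 0 ≤ f 0 := by simpa only [mul_zero] using hf_superhom 0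
    nlinarith
  exact concave_conditions_entreg_rl_general
    (fun s a s' => mul_nonneg hγ0.le (hp_nonneg s a s')) hκ_sum hπ0_pos
    (funext₂ fun s a => by rw [softBellman_const_mul, ← hQ]) hf_concave hf0 hf_superadd (hf_lse Q)
    (fun s a => by
      rw [hCh, hrCh, softBellman_const_mul, sub_sub]
      simp only [hVf, mul_sum, mul_assoc])
    (funext₂ fun s a => by rw [softBellman_const_mul, ← hQt])
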